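/- Let B(·) be a ℂ^{m×m}-valued holomorphic function, λ an eigenvalue with right eigenvector y (B(λ)y = 0) and left eigenvector x (xᴴ B(λ) = 0) satisfying xᴴ B'(λ) y ≠ 0 and dim ker B(λ) = 1. Let Y_⊥ be an orthonormal basis of span{y}^⊥ and Z_⊥ an orthonormal basis of span{B'(λ)y}^⊥. Then the (m-1)×(m-1) matrix Z_⊥ᴴ B(λ) Y_⊥ is invertible. -/

import Mathlib

open Matrix

/-- The kernel of a `k × (k + 1)` matrix with a right inverse is a line, spanned by any of its
nonzero vectors. -/
theorem exists_smul_eq_of_mulVec_eq_zero {K : Type*} [Field K] {k : ℕ}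
    {A : Matrix (Fin k) (Fin (k + 1)) K} {R : Matrix (Fin (k + 1)) (Fin k) K} (hAR : A * R = 1)
    {u w : Fin (k + 1) → K} (hu0 : u ≠ 0) (hu : A *ᵥ u = 0) (hw : A *ᵥ w = 0) :
    ∃ c : K, c • u = w := by
  have hsurj : LinearMap.range A.mulVecLin = ⊤ :=
    LinearMap.range_eq_top.mpr fun v => ⟨R *ᵥ v, by simp [hAR]⟩
  have hdim : Module.finrank K (LinearMap.ker A.mulVecLin) = 1 := by
    have h := A.mulVecLin.finrank_range_add_finrank_ker
    rw [hsurj, finrank_top, Module.finrank_fin_fun, Module.finrank_fin_fun] at h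
    omega
  let u' : LinearMap.ker A.mulVecLin := ⟨u, by simpa using hu⟩
  let w' : LinearMap.ker A.mulVecLin := ⟨w, by simpa using hw⟩
  have hu' : u' ≠ 0 := fun h => hu0 (congrArg Subtype.val h)
  obtain ⟨c, hc⟩ := exists_smul_eq_of_finrank_eq_one hdim hu' w'
  exact ⟨c, congrArg Subtype.val hc⟩

theorem stmt_11 (k : ℕ) (B B' : Matrix (Fin (k + 1)) (Fin (k + 1)) ℂ)
    (x y : Fin (k + 1) → ℂ) (hy0 : y ≠ 0) (hx0 : x ≠ 0)
    (hy : B.mulVec y = 0) (hx : vecMul (star x) B = 0)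
    (hxB'y : star x ⬝ᵥ B'.mulVec y ≠ 0)
    (hker : ∀ z : Fin (k + 1) → ℂ, B.mulVec z = 0 → ∃ c : ℂ, z = c • y)
    (Y Z : Matrix (Fin (k + 1)) (Fin k) ℂ)
    (hY : Yᴴ * Y = 1) (hYy : Yᴴ.mulVec y = 0)
    (hZ : Zᴴ * Z = 1) (hZB'y : Zᴴ.mulVec (B'.mulVec y) = 0) :
    IsUnit (Zᴴ * B * Y) := by
  rw [← mulVec_injective_iff_isUnit, ← coe_mulVecLin, ← LinearMap.ker_eq_bot,
    LinearMap.ker_eq_bot']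
  intro v hv
  have hv' : Zᴴ *ᵥ (B *ᵥ (Y *ᵥ v)) = 0 := by
    simpa [mulVec_mulVec, Matrix.mul_assoc] using hv
  have hB'y0 : B' *ᵥ y ≠ 0 := fun h => hxB'y (by rw [h, dotProduct_zero])
  obtain ⟨c, hc⟩ := exists_smul_eq_of_mulVec_eq_zero hZ hB'y0 hZB'y hv'
  have hc0 : c = 0 := by
    have h := congrArg (star x ⬝ᵥ ·) hc
    simp only [dotProduct_smul, dotProduct_mulVec (star x) B, hx, zero_dotProduct,
      smul_eq_mul] at h
    exact (mul_eq_zero.mp h).resolve_right hxB'y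
  obtain ⟨d, hd⟩ := hker (Y *ᵥ v) (by rw [← hc, hc0, zero_smul])
  calc v = Yᴴ *ᵥ (Y *ᵥ v) := by rw [mulVec_mulVec, hY, one_mulVec]
    _ = 0 := by rw [hd, mulVec_smul, hYy, smul_zero]
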